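/- Let X be a metric space with a Busemann midpoint map m, and let B ⊆ X be a nonempty compact set with diameter D := diam(B). Define inductively B_1 := B and B_{n+1} := (B_n)*, where for a compact set A, A* := { m(x,y) : x, y ∈ A, dist(x,y) = diam(A) }. If diam(B_N) = D for some N ≥ 1, then there exist 2^N points x₁, …, x_{2^N} ∈ B such that dist(x_i, x_j) = D for all i ≠ j. -/

import Mathlib

open Filter MeasureTheory Metric Topology
open scoped Pointwise symmDiff ENNReal

/-- A Busemann midpoint map on a metric space. -/
structure BusemannMidpoint (X : Type*) [MetricSpace X] where
  mid : X → X → X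
  dist_left : ∀ x y, dist x (mid x y) = dist x y / 2
  dist_right : ∀ x y, dist (mid x y) y = dist x y / 2
  convex : ∀ x y x' y', dist (mid x y) (mid x' y') ≤ (dist x x' + dist y y') / 2

/-- A barycenter family on a metric space with a Busemann midpoint map. -/
structure BarycenterFamily (X : Type*) [MetricSpace X] (M : BusemannMidpoint X) where
  b : (n : ℕ) → (Fin n → X) → X
  b_one : ∀ x : Fin 1 → X, b 1 x = x 0
  b_two : ∀ x : Fin 2 → X, b 2 x = M.mid (x 0) (x 1)
  perm_invariant : ∀ (n : ℕ) (σ : Equiv.Perm (Fin n)) (x : Fin n → X), b n (x ∘ σ) = b n x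
  lipschitz : ∀ (n : ℕ) (x y : Fin n → X),
    dist (b n x) (b n y) ≤ (1 / n : ℝ) * ∑ i, dist (x i) (y i)
  recur : ∀ (n : ℕ), 1 ≤ n → ∀ x : Fin (n + 1) → X,
    b (n + 1) x = b (n + 1) (fun i => b n (x ∘ i.succAbove))

/-- The `k`-fold repetition of a tuple. -/
def repTuple {X : Type*} {n : ℕ} (Q : Fin n → X) (k : ℕ) : Fin (n * k) → X :=
  fun i => Q ⟨i.val % n, Nat.mod_lt _ (by
    rcases Nat.eq_zero_or_pos n with h | h
    · exact absurd i.isLt (by simp [h])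
    · exact h)⟩

/-- The set of midpoints of pairs of points of A realizing the diameter of A. -/
def midStar {X : Type*} [MetricSpace X] (M : BusemannMidpoint X) (A : Set X) : Set X :=
  {z | ∃ x ∈ A, ∃ y ∈ A, dist x y = Metric.diam A ∧ z = M.mid x y}

/-!
Every point `z` of `B_{n+1}` is an iterated midpoint of a family of `2 ^ n` points of `B`, and
convexity bounds the distance from `z` to any point `p` by the average distance from the family
to `p`. If `z` is the midpoint of `u, w ∈ B_n` with `dist u w = D`, averaging first over the family
of `u` and then over the family of `w` bounds `D` by an average of distances between points of `B`.
These are all at most `D`, so every one of them equals `D`, and the two families together are again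
equilateral. Compactness provides a point of `B_{N+1}` to start from.
-/

section PseudoMetric

variable {X : Type*} [PseudoMetricSpace X]

lemma exists_dist_eq_diam_of_isCompact {A : Set X} (hA : IsCompact A) (hne : A.Nonempty) :
    ∃ x ∈ A, ∃ y ∈ A, dist x y = diam A := by
  obtain ⟨⟨x, y⟩, ⟨hx, hy⟩, hmax⟩ :=
    (hA.prod hA).exists_isMaxOn (hne.prod hne) continuous_dist.continuousOn
  have hdiam : diam A ≤ dist x y :=
    diam_le_of_forall_dist_le dist_nonneg fun a ha b hb => hmax (Set.mk_mem_prod ha hb)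
  exact ⟨x, hx, y, hy, (dist_le_diam_of_mem hA.isBounded hx hy).antisymm hdiam⟩

lemma pairwise_dist_eq_sumElim {ι κ : Type*} {x : ι → X} {y : κ → X} {D : ℝ}
    (hx : Pairwise fun i j => dist (x i) (x j) = D)
    (hy : Pairwise fun i j => dist (y i) (y j) = D) (hxy : ∀ i j, dist (x i) (y j) = D) :
    Pairwise fun s t => dist (Sum.elim x y s) (Sum.elim x y t) = D := by
  rintro (i | i) (j | j) hij
  · exact hx fun h => hij (congrArg Sum.inl h)
  · exact hxy i j
  · exact (dist_comm (y i) (x j)).trans (hxy j i)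
  · exact hy fun h => hij (congrArg Sum.inr h)

end PseudoMetric

section Subbarycenter

variable {X ι κ : Type*} [PseudoMetricSpace X] [Fintype ι] [Fintype κ]
  {x : ι → X} {y : κ → X} {u w z p : X} {D : ℝ}

/-- `z` is a subbarycenter of the finite family `x` if the distance from `z` to any point is at most
the average distance from the members of `x` to that point. This is the property of iterated
midpoints on which the averaging argument rests. The average is cleared of its denominator, so
every point is a subbarycenter of the empty family. -/
def IsSubbarycenter (x : ι → X) (z : X) : Prop :=
  ∀ p, Fintype.card ι * dist z p ≤ ∑ i, dist (x i) p

namespace IsSubbarycenter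

lemma const [Unique ι] (z : X) : IsSubbarycenter (fun _ : ι => z) z := fun p => by simp

lemma comp_equiv (hz : IsSubbarycenter x z) (e : κ ≃ ι) : IsSubbarycenter (x ∘ e) z := fun p => by
  rw [Fintype.card_congr e]
  exact (hz p).trans_eq (e.sum_comp fun i => dist (x i) p).symm

lemma dist_le [Nonempty ι] (hz : IsSubbarycenter x z) (hD : ∀ i, dist (x i) p ≤ D) :
    dist z p ≤ D := by
  have hcard : (0 : ℝ) < Fintype.card ι := by exact_mod_cast Fintype.card_pos
  refine le_of_mul_le_mul_left ?_ hcard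
  calc Fintype.card ι * dist z p ≤ ∑ i, dist (x i) p := hz p
    _ ≤ ∑ _i : ι, D := Finset.sum_le_sum fun i _ => hD i
    _ = Fintype.card ι * D := by simp

lemma dist_eq (hz : IsSubbarycenter x z) (hD : ∀ i, dist (x i) p ≤ D) (hzp : D ≤ dist z p) (i : ι) :
    dist (x i) p = D := by
  have hsum : ∑ i, dist (x i) p = ∑ _i : ι, D := by
    refine le_antisymm (Finset.sum_le_sum fun i _ => hD i) ?_
    calc ∑ _i : ι, D = Fintype.card ι * D := by simp
      _ ≤ Fintype.card ι * dist z p := by gcongr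
      _ ≤ ∑ i, dist (x i) p := hz p
  exact (Finset.sum_eq_sum_iff_of_le fun i _ => hD i).1 hsum i (Finset.mem_univ i)

lemma dist_eq_of_le_dist (hu : IsSubbarycenter x u) (hw : IsSubbarycenter y w)
    (hD : ∀ i j, dist (x i) (y j) ≤ D) (huw : D ≤ dist u w) (i : ι) (j : κ) :
    dist (x i) (y j) = D := by
  have hD' : ∀ i j, dist (y j) (x i) ≤ D := fun i j => dist_comm (x i) (y j) ▸ hD i j
  have : Nonempty κ := ⟨j⟩
  have hxw : ∀ i, dist (x i) w = D :=
    hu.dist_eq (fun i => dist_comm w (x i) ▸ hw.dist_le (hD' i)) huw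
  have hwx : D ≤ dist w (x i) := by rw [dist_comm, hxw i]
  rw [dist_comm]
  exact hw.dist_eq (hD' i) hwx j

end IsSubbarycenter

end Subbarycenter

section Midpoint

variable {X : Type*} [MetricSpace X] (M : BusemannMidpoint X) {A : Set X}

namespace BusemannMidpoint

lemma mid_self (x : X) : M.mid x x = x := by
  have h : dist x (M.mid x x) = 0 := by rw [M.dist_left, dist_self, zero_div]
  exact (dist_eq_zero.1 h).symm

lemma dist_mid_le (u w p : X) : dist (M.mid u w) p ≤ (dist u p + dist w p) / 2 := by
  simpa only [M.mid_self] using M.convex u w p p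

lemma lipschitzWith_mid : LipschitzWith 1 fun p : X × X => M.mid p.1 p.2 :=
  LipschitzWith.of_dist_le_mul fun p q => by
    have hfst : dist p.1 q.1 ≤ dist p q := le_max_left _ _
    have hsnd : dist p.2 q.2 ≤ dist p q := le_max_right _ _
    rw [NNReal.coe_one, one_mul]
    linarith [M.convex p.1 p.2 q.1 q.2]

lemma isSubbarycenter_mid {ι κ : Type*} [Fintype ι] [Fintype κ] {x : ι → X} {y : κ → X} {u w : X}
    (hcard : Fintype.card ι = Fintype.card κ) (hu : IsSubbarycenter x u)
    (hw : IsSubbarycenter y w) : IsSubbarycenter (Sum.elim x y) (M.mid u w) := fun p => by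
  calc (Fintype.card (ι ⊕ κ) : ℝ) * dist (M.mid u w) p
      ≤ Fintype.card (ι ⊕ κ) * ((dist u p + dist w p) / 2) := by
        gcongr
        exact M.dist_mid_le u w p
    _ = Fintype.card ι * dist u p + Fintype.card κ * dist w p := by
        rw [Fintype.card_sum, hcard]
        push_cast
        ring
    _ ≤ ∑ i, dist (x i) p + ∑ j, dist (y j) p := add_le_add (hu p) (hw p)
    _ = ∑ s, dist (Sum.elim x y s) p := by rw [Fintype.sum_sum_type]; rfl

end BusemannMidpoint

lemma midStar_eq_image : midStar M A =
    (fun p : X × X => M.mid p.1 p.2) '' (A ×ˢ A ∩ {p | dist p.1 p.2 = diam A}) := by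
  ext z
  constructor
  · rintro ⟨x, hx, y, hy, hxy, rfl⟩
    exact ⟨(x, y), ⟨⟨hx, hy⟩, hxy⟩, rfl⟩
  · rintro ⟨⟨x, y⟩, ⟨⟨hx, hy⟩, hxy⟩, rfl⟩
    exact ⟨x, hx, y, hy, hxy, rfl⟩

lemma isCompact_midStar (hA : IsCompact A) : IsCompact (midStar M A) := by
  rw [midStar_eq_image]
  exact ((hA.prod hA).inter_right (isClosed_eq continuous_dist continuous_const)).image
    M.lipschitzWith_mid.continuous

lemma midStar_nonempty (hA : IsCompact A) (hne : A.Nonempty) : (midStar M A).Nonempty := by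
  obtain ⟨x, hx, y, hy, hxy⟩ := exists_dist_eq_diam_of_isCompact hA hne
  exact ⟨M.mid x y, x, hx, y, hy, hxy, rfl⟩

lemma iterate_midStar_nonempty (hA : IsCompact A) (hne : A.Nonempty) (n : ℕ) :
    ((midStar M)^[n] A).Nonempty := by
  have hmaps : Set.MapsTo (midStar M)
      {K | IsCompact K ∧ K.Nonempty} {K | IsCompact K ∧ K.Nonempty} :=
    fun _ hK => ⟨isCompact_midStar M hK.1, midStar_nonempty M hK.1 hK.2⟩
  exact (hmaps.iterate n ⟨hA, hne⟩).2

lemma dist_le_diam_of_mem_midStar (hA : Bornology.IsBounded A) {z z' : X}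
    (hz : z ∈ midStar M A) (hz' : z' ∈ midStar M A) : dist z z' ≤ diam A := by
  obtain ⟨x, hx, y, hy, -, rfl⟩ := hz
  obtain ⟨x', hx', y', hy', -, rfl⟩ := hz'
  linarith [M.convex x y x' y', dist_le_diam_of_mem hA hx hx', dist_le_diam_of_mem hA hy hy']

lemma isBounded_midStar (hA : Bornology.IsBounded A) : Bornology.IsBounded (midStar M A) :=
  isBounded_iff.2 ⟨diam A, fun _ hz _ hz' => dist_le_diam_of_mem_midStar M hA hz hz'⟩

lemma diam_midStar_le (hA : Bornology.IsBounded A) : diam (midStar M A) ≤ diam A :=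
  diam_le_of_forall_dist_le diam_nonneg fun _ hz _ hz' => dist_le_diam_of_mem_midStar M hA hz hz'

lemma antitone_diam_iterate_midStar (hA : Bornology.IsBounded A) :
    Antitone fun n => diam ((midStar M)^[n] A) := by
  have hmaps : Set.MapsTo (midStar M) {K | Bornology.IsBounded K} {K | Bornology.IsBounded K} :=
    fun _ hK => isBounded_midStar M hK
  refine antitone_nat_of_succ_le fun n => ?_
  rw [Function.iterate_succ_apply']
  exact diam_midStar_le M (hmaps.iterate n hA)

theorem exists_equilateral_isSubbarycenter_of_mem_iterate_midStar
    (hA : Bornology.IsBounded A) {n : ℕ}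
    (hdiam : ∀ k < n, diam ((midStar M)^[k] A) = diam A) {z : X} (hz : z ∈ (midStar M)^[n] A) :
    ∃ x : Fin (2 ^ n) → X, (∀ i, x i ∈ A) ∧ (Pairwise fun i j => dist (x i) (x j) = diam A) ∧
      IsSubbarycenter x z := by
  induction n generalizing z with
  | zero =>
    have : Unique (Fin (2 ^ 0)) := inferInstanceAs (Unique (Fin 1))
    exact ⟨fun _ => z, fun _ => hz, fun i j hij => (hij (Subsingleton.elim i j)).elim, .const z⟩
  | succ n ih =>
    rw [Function.iterate_succ_apply'] at hz
    obtain ⟨u, hu, w, hw, huw, rfl⟩ := hz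
    rw [hdiam n n.lt_succ_self] at huw
    have hdiam' : ∀ k < n, diam ((midStar M)^[k] A) = diam A := fun k hk =>
      hdiam k (hk.trans n.lt_succ_self)
    obtain ⟨x, hxA, hx, hxu⟩ := ih hdiam' hu
    obtain ⟨y, hyA, hy, hyw⟩ := ih hdiam' hw
    have hxy : ∀ i j, dist (x i) (y j) = diam A :=
      hxu.dist_eq_of_le_dist hyw (fun i j => dist_le_diam_of_mem hA (hxA i) (hyA j)) huw.ge
    let e : Fin (2 ^ (n + 1)) ≃ Fin (2 ^ n) ⊕ Fin (2 ^ n) :=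
      (finCongr (by ring)).trans finSumFinEquiv.symm
    have hmem : ∀ s, Sum.elim x y s ∈ A := Sum.rec hxA hyA
    exact ⟨Sum.elim x y ∘ e, fun i => hmem (e i),
      (pairwise_dist_eq_sumElim hx hy hxy).comp_of_injective e.injective,
      (M.isSubbarycenter_mid rfl hxu hyw).comp_equiv e⟩

end Midpoint

/-- if the N-th iterated set of diameter-realizing midpoints of a
nonempty compact set B still has the same diameter D as B, then B contains 2^N
points with pairwise distances all equal to D. -/
theorem points_of_diam_iterate_midStar_eq {X : Type*} [MetricSpace X]
    (M : BusemannMidpoint X) (B : Set X) (hBne : B.Nonempty) (hBcpt : IsCompact B)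
    (Bs : ℕ → Set X) (h1 : Bs 1 = B)
    (hrec : ∀ n : ℕ, 1 ≤ n → Bs (n + 1) = midStar M (Bs n))
    (N : ℕ) (hN : 1 ≤ N) (hdiam : Metric.diam (Bs N) = Metric.diam B) :
    ∃ x : Fin (2 ^ N) → X, (∀ i, x i ∈ B) ∧
      ∀ i j, i ≠ j → dist (x i) (x j) = Metric.diam B := by
  obtain ⟨n, rfl⟩ := Nat.exists_eq_add_of_le' hN
  have hBs : ∀ k, Bs (k + 1) = (midStar M)^[k] B := by
    intro k
    induction k with
    | zero => exact h1
    | succ k ih => rw [hrec (k + 1) k.succ_pos, ih, Function.iterate_succ_apply']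
  rw [hBs] at hdiam
  have hanti := antitone_diam_iterate_midStar M hBcpt.isBounded
  have hdiam_eq : ∀ k < n + 1, diam ((midStar M)^[k] B) = diam B := fun k hk =>
    (hanti k.zero_le).antisymm (hdiam.ge.trans (hanti (Nat.le_of_lt_succ hk)))
  obtain ⟨z, hz⟩ := iterate_midStar_nonempty M hBcpt hBne (n + 1)
  obtain ⟨x, hxB, hx, -⟩ :=
    exists_equilateral_isSubbarycenter_of_mem_iterate_midStar M hBcpt.isBounded hdiam_eq hz
  exact ⟨x, hxB, fun _ _ hij => hx hij⟩
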